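/- arXiv:2307.16497 — 3 statements merged into one kernel-verified Lean document; each statement's English description precedes it below -/
import Mathlib

section
/- For every integer d ≥ 1, the integral over ℝ^d of (1+|ξ|²)^{-(d+2)/2} with respect to Lebesgue measure equals the Lebesgue volume of the unit ball of ℝ^d; i.e. ω_d := ∫_{ℝ^d} (1+|ξ|²)^{-(1+d/2)} dξ = vol(B(0,1) ⊆ ℝ^d). -/
/-!
In polar coordinates the integral is `d * vol(B) * ∫₀^∞ y ^ (d-1) (1 + y²) ^ (-(1 + d/2)) dy`, where
`B` is the unit ball. The radial integrand times `d` is the derivative of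
`y ^ d (1 + y²) ^ (-d/2) = (y / √(1 + y²)) ^ d`, which increases from `0` at the origin to `1` at
infinity, so `d` times the radial integral is `1`.
-/

open MeasureTheory

/-- The function `(y / √(1 + y²)) ^ d` is a primitive of `d` times the radial density. -/
lemma hasDerivAt_radial_primitive (d : ℕ) (y : ℝ) :
    HasDerivAt (fun y : ℝ => y ^ d * (1 + y ^ 2) ^ (-((d : ℝ) / 2)))
      (d * (y ^ (d - 1) * (1 + y ^ 2) ^ (-(1 + (d : ℝ) / 2)))) y := by
  have hpos : (0 : ℝ) < 1 + y ^ 2 := by positivity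
  have h1 : HasDerivAt (fun y : ℝ => 1 + y ^ 2) (2 * y) y := by
    simpa using (hasDerivAt_pow 2 y).const_add 1
  have h2 := (hasDerivAt_pow d y).mul
    (h1.rpow_const (p := -((d : ℝ) / 2)) (Or.inl hpos.ne'))
  refine h2.congr_deriv ?_
  have e1 : (1 + y ^ 2) ^ (-((d : ℝ) / 2)) =
      (1 + y ^ 2) * (1 + y ^ 2) ^ (-(1 + (d : ℝ) / 2)) := by
    have h := Real.rpow_add hpos 1 (-(1 + (d : ℝ) / 2))
    rw [Real.rpow_one] at h
    rw [← h]
    congr 1; ring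
  have e2 : -((d : ℝ) / 2) - 1 = -(1 + (d : ℝ) / 2) := by ring
  rw [e2, e1]
  cases d with
  | zero => simp
  | succ n => simp only [Nat.add_sub_cancel]; ring

lemma tendsto_radial_primitive (d : ℕ) :
    Filter.Tendsto (fun y : ℝ => y ^ d * (1 + y ^ 2) ^ (-((d : ℝ) / 2)))
      Filter.atTop (nhds 1) := by
  have h0 : Filter.Tendsto (fun y : ℝ => 1 + y ^ 2) Filter.atTop Filter.atTop :=
    Filter.tendsto_atTop_add_const_left _ _ (Filter.tendsto_pow_atTop two_ne_zero)
  have h1 : Filter.Tendsto (fun y : ℝ => (1 - (1 + y ^ 2)⁻¹) ^ ((d : ℝ) / 2))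
      Filter.atTop (nhds 1) := by
    have := (h0.inv_tendsto_atTop.const_sub 1).rpow_const (p := (d : ℝ) / 2) (by simp)
    simpa using this
  refine h1.congr' ?_
  filter_upwards [Filter.eventually_gt_atTop 0] with y hy
  have hpos : (0 : ℝ) < 1 + y ^ 2 := by positivity
  have e1 : 1 - (1 + y ^ 2)⁻¹ = y ^ 2 / (1 + y ^ 2) := by field_simp; ring
  have e2 : (y ^ 2) ^ ((d : ℝ) / 2) = y ^ d := by
    rw [← Real.rpow_natCast y 2, ← Real.rpow_mul hy.le, ← Real.rpow_natCast]
    congr 1; push_cast; ring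
  rw [e1, Real.div_rpow (by positivity) hpos.le, e2, Real.rpow_neg hpos.le, div_eq_mul_inv]

/-- For every integer `d ≥ 1`, `ω_d := ∫_{ℝ^d} (1+|ξ|²)^{-(1+d/2)} dξ` equals the Lebesgue
volume of the unit ball of `ℝ^d`. -/
theorem omega_d_eq_volume_unit_ball (d : ℕ) (hd : 1 ≤ d) :
    (∫ ξ : EuclideanSpace ℝ (Fin d), (1 + ‖ξ‖ ^ 2) ^ (-(1 + (d : ℝ) / 2))) =
      (volume (Metric.ball (0 : EuclideanSpace ℝ (Fin d)) 1)).toReal := by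
  have : Nonempty (Fin d) := ⟨⟨0, hd⟩⟩
  have key := integral_Ioi_of_hasDerivAt_of_nonneg' (a := 0)
    (fun y _ => hasDerivAt_radial_primitive d y)
    (fun y hy => by have : (0 : ℝ) < y := hy; positivity) (tendsto_radial_primitive d)
  rw [integral_const_mul, zero_pow (by lia), zero_mul, sub_zero] at key
  rw [integral_fun_norm_addHaar volume (fun y : ℝ => (1 + y ^ 2) ^ (-(1 + (d : ℝ) / 2)))]
  simp only [finrank_euclideanSpace_fin, smul_eq_mul, nsmul_eq_mul]
  rw [mul_left_comm, key, mul_one, Measure.real]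
end

section
/- Let d ≥ 1, let Ω ⊆ ℝ^d be a nonempty bounded open convex set, let K : Ω → ℝ be continuous with K ≥ 0, and let u ∈ C²(Ω) be convex and satisfy det(D²u(x)) = K(x)(1+|∇u(x)|²)^{(d+2)/2} for all x ∈ Ω. Then ∫_Ω K(x) dx ≤ ω_d, where ω_d = ∫_{ℝ^d} (1+|p|²)^{-(d+2)/2} dp is the volume of the unit ball of ℝ^d. -/
open MeasureTheory

/-!
The proof is Aleksandrov's change of variables `p = ∇u(x)`. On the set `A = {x ∈ Ω | K x ≠ 0}`,
where the Hessian is nondegenerate, the gradient map is injective: if `∇u(x) = ∇u(y) = p`, then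
`u - ⟨p, ·⟩` is convex and attains its minimum over `Ω` at every point of the segment `[x, y]`,
so `∇u` is constant on this segment and `D²u(x)` annihilates `y - x`. Since
`|det D²u| (1 + |∇u|²)^{-(d+2)/2} = K` on `A`, the area formula gives
`∫_Ω K = ∫_A K = ∫_{∇u(A)} (1 + |p|²)^{-(d+2)/2} dp`, which is at most the integral over all
of `ℝ^d` because the density is nonnegative and integrable.
-/

/-- The partial derivative `∂f/∂x_i` of a scalar function on `ℝ^d`. -/
noncomputable def pd {d : ℕ} (i : Fin d) (f : EuclideanSpace ℝ (Fin d) → ℝ)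
    (x : EuclideanSpace ℝ (Fin d)) : ℝ :=
  fderiv ℝ f x (EuclideanSpace.single i 1)

/-- The Hessian matrix `D²u(x) = (∂²u/∂x_i∂x_j)_{i,j}`. -/
noncomputable def Hess {d : ℕ} (u : EuclideanSpace ℝ (Fin d) → ℝ)
    (x : EuclideanSpace ℝ (Fin d)) : Matrix (Fin d) (Fin d) ℝ :=
  Matrix.of fun i j => pd i (pd j u) x

/-- A convex function lies above its tangent hyperplanes. -/
lemma tangent_le_of_convexOn {d : ℕ} {Ω : Set (EuclideanSpace ℝ (Fin d))}
    {u : EuclideanSpace ℝ (Fin d) → ℝ} (hconv : ConvexOn ℝ Ω u)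
    {x : EuclideanSpace ℝ (Fin d)} (hx : x ∈ Ω) (hd : DifferentiableAt ℝ u x) :
    ∀ z ∈ Ω, u x - fderiv ℝ u x x ≤ u z - fderiv ℝ u x z := by
  have hcv : ConvexOn ℝ Ω (fun z => u z - fderiv ℝ u x z) := by
    refine hconv.sub ⟨hconv.1, ?_⟩
    intro a _ b _ s t _ _ _
    simp
  intro z hz
  by_contra! hlt
  set g : EuclideanSpace ℝ (Fin d) → ℝ := fun z => u z - fderiv ℝ u x z with hg
  have hgd : HasFDerivAt g (0 : EuclideanSpace ℝ (Fin d) →L[ℝ] ℝ) x := by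
    have h := hd.hasFDerivAt.sub (fderiv ℝ u x).hasFDerivAt
    rw [sub_self] at h
    exact h
  have hline : HasDerivAt (fun t : ℝ => g (x + t • (z - x))) 0 0 := by
    have h1 : HasDerivAt (fun t : ℝ => x + t • (z - x)) (z - x) 0 := by
      simpa using ((hasDerivAt_id (0 : ℝ)).smul_const (z - x)).const_add x
    have h2 : HasFDerivAt g (0 : EuclideanSpace ℝ (Fin d) →L[ℝ] ℝ) (x + (0 : ℝ) • (z - x)) := by
      simpa using hgd
    exact h2.comp_hasDerivAt (0 : ℝ) h1
  -- By convexity the difference quotients along the segment are at most `g z - g x`.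
  have hslope := hline.tendsto_slope_zero_right
  have hle : (0 : ℝ) ≤ g z - g x := by
    refine le_of_tendsto hslope ?_
    filter_upwards [Ioo_mem_nhdsGT (zero_lt_one (α := ℝ))] with t ht
    have h := hcv.2 hx hz (sub_nonneg.2 ht.2.le) ht.1.le (by ring)
    have he : (1 - t) • x + t • z = x + t • (z - x) := by module
    rw [he] at h
    have h' : g (x + t • (z - x)) ≤ (1 - t) * g x + t * g z := h
    simp only [zero_add, zero_smul, add_zero, smul_eq_mul]
    rw [inv_mul_le_iff₀ ht.1]
    linarith
  have : g z < g x := hlt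
  linarith

/-- If a convex function has the same differential at two points, then its differential is
constant on the segment between them. -/
lemma fderiv_eq_on_segment {d : ℕ} {Ω : Set (EuclideanSpace ℝ (Fin d))} (ho : IsOpen Ω)
    {u : EuclideanSpace ℝ (Fin d) → ℝ} (hconv : ConvexOn ℝ Ω u)
    (hd : ∀ x ∈ Ω, DifferentiableAt ℝ u x)
    {x y : EuclideanSpace ℝ (Fin d)} (hx : x ∈ Ω) (hy : y ∈ Ω)
    (hxy : fderiv ℝ u x = fderiv ℝ u y) {t : ℝ} (ht : t ∈ Set.Icc (0 : ℝ) 1) :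
    fderiv ℝ u (x + t • (y - x)) = fderiv ℝ u x := by
  have he : (1 - t) • x + t • y = x + t • (y - x) := by module
  set w := x + t • (y - x) with hw
  have hwΩ : w ∈ Ω := he ▸ hconv.1 hx hy (sub_nonneg.2 ht.2) ht.1 (by ring)
  have hux := tangent_le_of_convexOn hconv hx (hd x hx)
  have huy := tangent_le_of_convexOn hconv hy (hd y hy)
  have hval : u w - fderiv ℝ u x w ≤ u x - fderiv ℝ u x x := by
    have h1 := huy x hx
    rw [← hxy] at h1
    have h2 := hconv.2 hx hy (sub_nonneg.2 ht.2) ht.1 (by ring)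
    rw [he] at h2
    have h3 : fderiv ℝ u x w = (1 - t) * fderiv ℝ u x x + t * fderiv ℝ u x y := by
      rw [← he]; simp
    simp only [smul_eq_mul] at h2
    nlinarith [mul_le_mul_of_nonneg_left h1 ht.1]
  have hmin : IsLocalMin (fun z => u z - fderiv ℝ u x z) w := by
    filter_upwards [ho.mem_nhds hwΩ] with z hz
    exact hval.trans (hux z hz)
  have h0 := hmin.hasFDerivAt_eq_zero
    ((hd w hwΩ).hasFDerivAt.sub (fderiv ℝ u x).hasFDerivAt)
  exact sub_eq_zero.1 h0

/-- The Hessian matrix is the transpose of the Jacobian matrix of the gradient map. -/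
lemma det_Hess_eq {d : ℕ} {u : EuclideanSpace ℝ (Fin d) → ℝ} {x : EuclideanSpace ℝ (Fin d)}
    (hg : DifferentiableAt ℝ (gradient u) x) :
    (Hess u x).det = (fderiv ℝ (gradient u) x).det := by
  have hpd : ∀ j : Fin d, pd j u = fun z => gradient u z j := by
    intro j
    funext z
    have : inner ℝ (gradient u z) (EuclideanSpace.single j (1 : ℝ))
        = fderiv ℝ u z (EuclideanSpace.single j 1) := by
      simp [gradient]
    rw [pd, ← this, EuclideanSpace.inner_single_right]
    simp
  have hM : (Hess u x).transpose = LinearMap.toMatrix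
      (EuclideanSpace.basisFun (Fin d) ℝ).toBasis (EuclideanSpace.basisFun (Fin d) ℝ).toBasis
      (fderiv ℝ (gradient u) x : EuclideanSpace ℝ (Fin d) →ₗ[ℝ] EuclideanSpace ℝ (Fin d)) := by
    ext j i
    rw [LinearMap.toMatrix_apply]
    simp only [Matrix.transpose_apply, Hess, Matrix.of_apply]
    have h := (EuclideanSpace.proj (𝕜 := ℝ) j).hasFDerivAt.comp x hg.hasFDerivAt
    have h' : fderiv ℝ (pd j u) x
        = (EuclideanSpace.proj (𝕜 := ℝ) j).comp (fderiv ℝ (gradient u) x) := by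
      rw [hpd j]
      exact h.fderiv
    rw [pd, h']
    simp
  rw [← Matrix.det_transpose, hM, LinearMap.det_toMatrix]

/-- If `u` is a convex `C²` solution of the Minkowski equation
`det(D²u) = K (1+|∇u|²)^{(d+2)/2}` on a nonempty bounded open convex `Ω ⊆ ℝ^d` with `K ≥ 0`
continuous, then `∫_Ω K ≤ ω_d = ∫_{ℝ^d} (1+|p|²)^{-(d+2)/2} dp`. -/
theorem integral_curvature_le_omega_d (d : ℕ) (hd : 1 ≤ d)
    (Ω : Set (EuclideanSpace ℝ (Fin d))) (hne : Ω.Nonempty) (ho : IsOpen Ω)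
    (hb : Bornology.IsBounded Ω) (hc : Convex ℝ Ω)
    (K : EuclideanSpace ℝ (Fin d) → ℝ) (hKc : ContinuousOn K Ω) (hK0 : ∀ x ∈ Ω, 0 ≤ K x)
    (u : EuclideanSpace ℝ (Fin d) → ℝ) (hu : ContDiffOn ℝ 2 u Ω)
    (hconv : ConvexOn ℝ Ω u)
    (heq : ∀ x ∈ Ω, (Hess u x).det =
      K x * (1 + ‖gradient u x‖ ^ 2) ^ (((d : ℝ) + 2) / 2)) :
    (∫ x in Ω, K x) ≤
      ∫ p : EuclideanSpace ℝ (Fin d), (1 + ‖p‖ ^ 2) ^ (-((d : ℝ) + 2) / 2) := by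
  have hud : ∀ x ∈ Ω, DifferentiableAt ℝ u x := fun x hx =>
    (hu.contDiffAt (ho.mem_nhds hx)).differentiableAt (by norm_num)
  have hgd : ∀ x ∈ Ω, DifferentiableAt ℝ (gradient u) x := by
    intro x hx
    have h1 : DifferentiableAt ℝ (fderiv ℝ u) x :=
      ((hu.contDiffAt (ho.mem_nhds hx)).fderiv_right (m := 1) (by norm_num)).differentiableAt
        (by norm_num)
    exact (InnerProductSpace.toDual ℝ
      (EuclideanSpace ℝ (Fin d))).symm.toContinuousLinearEquiv.differentiableAt.comp x h1
  set A : Set (EuclideanSpace ℝ (Fin d)) := Ω ∩ K ⁻¹' {0}ᶜ with hA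
  have hAΩ : A ⊆ Ω := Set.inter_subset_left
  have hAm : MeasurableSet A :=
    (hKc.isOpen_inter_preimage ho isOpen_compl_singleton).measurableSet
  have hdet : ∀ x ∈ Ω, (fderiv ℝ (gradient u) x).det =
      K x * (1 + ‖gradient u x‖ ^ 2) ^ (((d : ℝ) + 2) / 2) := fun x hx => by
    rw [← det_Hess_eq (hgd x hx), heq x hx]
  have hpos : ∀ p : EuclideanSpace ℝ (Fin d), 0 < 1 + ‖p‖ ^ 2 := fun p => by positivity
  have hinj : Set.InjOn (gradient u) A := by
    intro x hx y hy hxy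
    by_contra hne'
    have hf : fderiv ℝ u x = fderiv ℝ u y := by
      simpa [gradient] using hxy
    have hker : fderiv ℝ (gradient u) x (y - x) = 0 := by
      have h1 : HasDerivAt (fun t : ℝ => x + t • (y - x)) (y - x) 0 := by
        simpa using ((hasDerivAt_id (0 : ℝ)).smul_const (y - x)).const_add x
      have h2 : HasFDerivAt (gradient u) (fderiv ℝ (gradient u) x) (x + (0 : ℝ) • (y - x)) := by
        simpa using (hgd x hx.1).hasFDerivAt
      have h3 := (h2.comp_hasDerivAt (0 : ℝ) h1).hasDerivWithinAt (s := Set.Icc 0 1)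
      have h4 : HasDerivWithinAt (gradient u ∘ fun t : ℝ => x + t • (y - x)) 0
          (Set.Icc 0 1) 0 := by
        refine (hasDerivWithinAt_const (0 : ℝ) (Set.Icc (0 : ℝ) 1) (gradient u x)).congr ?_ ?_
        · intro t ht
          simp only [Function.comp, gradient]
          rw [fderiv_eq_on_segment ho hconv hud hx.1 hy.1 hf ht]
        · simp
      exact (uniqueDiffOn_Icc_zero_one 0 (by simp)).eq_deriv _ h3 h4
    have hz : (fderiv ℝ (gradient u) x).det = 0 := by
      by_contra hnz
      have hi := (LinearMap.equivOfDetNeZero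
        (fderiv ℝ (gradient u) x : EuclideanSpace ℝ (Fin d) →ₗ[ℝ] EuclideanSpace ℝ (Fin d))
        hnz).injective
      have : y - x = 0 := hi (by
        rw [map_zero]; exact hker)
      exact hne' (sub_eq_zero.1 this).symm
    rw [hdet x hx.1] at hz
    exact (mul_ne_zero hx.2 (Real.rpow_pos_of_pos (hpos _) _).ne') hz
  have hint : Integrable
      (fun p : EuclideanSpace ℝ (Fin d) => (1 + ‖p‖ ^ 2) ^ (-((d : ℝ) + 2) / 2)) := by
    apply integrable_rpow_neg_one_add_norm_sq
    simp
  calc (∫ x in Ω, K x) = ∫ x in A, K x := by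
        refine setIntegral_eq_of_subset_of_forall_sdiff_eq_zero ho.measurableSet hAΩ ?_
        intro x hx
        by_contra h
        exact hx.2 ⟨hx.1, h⟩
    _ = ∫ x in A, |(fderiv ℝ (gradient u) x).det| •
          (1 + ‖gradient u x‖ ^ 2) ^ (-((d : ℝ) + 2) / 2) := by
        refine setIntegral_congr_fun hAm fun x hx => ?_
        have hP := Real.rpow_pos_of_pos (hpos (gradient u x)) (((d : ℝ) + 2) / 2)
        simp only [smul_eq_mul]
        rw [hdet x hx.1, abs_of_nonneg (mul_nonneg (hK0 x hx.1) hP.le), neg_div,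
          Real.rpow_neg (hpos _).le, mul_assoc, mul_inv_cancel₀ hP.ne', mul_one]
    _ = ∫ p in gradient u '' A, (1 + ‖p‖ ^ 2) ^ (-((d : ℝ) + 2) / 2) :=
        (integral_image_eq_integral_abs_det_fderiv_smul volume hAm
          (fun x hx => (hgd x hx.1).hasFDerivAt.hasFDerivWithinAt) hinj
          (fun p => (1 + ‖p‖ ^ 2) ^ (-((d : ℝ) + 2) / 2))).symm
    _ ≤ _ := setIntegral_le_integral hint
        (Filter.Eventually.of_forall fun p => (Real.rpow_pos_of_pos (hpos p) _).le)
end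

section
/- Let d ≥ 1, let Ω ⊆ ℝ^d be a nonempty bounded open convex set, let K : Ω → ℝ be continuous with K ≥ 0, and let u ∈ C²(Ω) be convex, Lipschitz continuous on Ω with Lipschitz constant M, and satisfy det(D²u(x)) = K(x)(1+|∇u(x)|²)^{(d+2)/2} for all x ∈ Ω. Then ∫_Ω K(x) dx ≤ ∫_{|p|<M} (1+|p|²)^{-(d+2)/2} dp < ω_d. In particular, the strict inequality ∫_Ω K dx < ω_d (condition (2.3) of the theorem of Trudinger–Urbas) is necessary for solvability of the Minkowski–Dirichlet problem in C²(Ω) ∩ C^{0,1}(Ω̄). -/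
/-!
The gradient map `∇u` is a `C¹` map with Jacobian determinant `det D²u`, so the area formula turns
`∫ K = ∫ det D²u · (1+|∇u|²)^{-(d+2)/2}` into the integral of `(1+|p|²)^{-(d+2)/2}` over the image
of `∇u`, once `∇u` is known to be injective where `K > 0` (`injOn_gradient`). Injectivity is where
convexity enters. By the first-order characterisation `convexOn_fderiv_le`, every point at which
`∇u = p` minimises `u - ⟨p, ·⟩`, and the minimisers of a convex function form a convex set; hence if
`∇u` takes the same value at `x ≠ y`, it is constant on the segment `[x, y]`
(`fderiv_eq_on_segment`). Then `D²u(x)(y - x) = 0`, which forces `det D²u(x) = 0` and `K(x) = 0`.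

The Lipschitz bound puts the image in the closed ball of radius `M`, which differs from the open
ball by a null set. The last inequality is strict because the integrand is positive and integrable
and the complement of a ball has positive measure.
-/

open MeasureTheory

section Convex

variable {E : Type*} [NormedAddCommGroup E] [NormedSpace ℝ E]

/-- The graph of a convex function lies above its tangent planes. -/
lemma convexOn_fderiv_le {s : Set E} {u : E → ℝ} (hu : ConvexOn ℝ s u) {x y : E}
    (hx : x ∈ s) (hy : y ∈ s) (hd : DifferentiableAt ℝ u x) :
    u x + fderiv ℝ u x (y - x) ≤ u y := by
  have h1 := hu.comp_affineMap (AffineMap.lineMap x y : ℝ →ᵃ[ℝ] E)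
  have h2 : HasDerivAt (u ∘ (AffineMap.lineMap x y : ℝ →ᵃ[ℝ] E)) (fderiv ℝ u x (y - x)) 0 := by
    have h3 : HasDerivAt (AffineMap.lineMap x y : ℝ →ᵃ[ℝ] E) (y - x) (0 : ℝ) :=
      AffineMap.hasDerivAt_lineMap
    refine HasFDerivAt.comp_hasDerivAt (0 : ℝ) ?_ h3
    simpa using hd.hasFDerivAt
  have h4 := h1.le_slope_of_hasDerivAt (x := 0) (y := 1) (by simpa using hx) (by simpa using hy)
    one_pos h2
  simp [slope_def_field] at h4
  rw [map_sub]
  linarith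

/-- A convex function whose derivatives at `x` and `y` agree has that same derivative at every
point of the segment `[x, y]`. -/
lemma fderiv_eq_on_segment_s3 {s : Set E} (ho : IsOpen s) {u : E → ℝ} (hu : ConvexOn ℝ s u)
    (hd : ∀ z ∈ s, DifferentiableAt ℝ u z) {x y : E} (hx : x ∈ s) (hy : y ∈ s)
    (hxy : fderiv ℝ u x = fderiv ℝ u y) {z : E} (hz : z ∈ segment ℝ x y) :
    fderiv ℝ u z = fderiv ℝ u x := by
  have hzs : z ∈ s := hu.1.segment_subset hx hy hz
  -- `z` minimises `u - u'(x)` on `s`, since `x` and `y` do.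
  have hmin : ∀ w ∈ s, u z - fderiv ℝ u x z ≤ u w - fderiv ℝ u x w := by
    intro w hw
    have h1 := convexOn_fderiv_le hu hx hw (hd x hx)
    have h2 := convexOn_fderiv_le hu hy hw (hd y hy)
    rw [← hxy] at h2
    obtain ⟨a, b, ha, hb, hab, rfl⟩ := hz
    have h3 := hu.2 hx hy ha hb hab
    simp only [map_sub, map_add, map_smul, smul_eq_mul] at *
    have h4 := mul_le_mul_of_nonneg_left h1 ha
    have h5 := mul_le_mul_of_nonneg_left h2 hb
    obtain rfl : b = 1 - a := by linarith
    linarith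
  have hloc : IsLocalMin (fun w => u w - fderiv ℝ u x w) z :=
    Filter.mem_of_superset (ho.mem_nhds hzs) hmin
  have h0 : HasFDerivAt (fun w => u w - fderiv ℝ u x w) (fderiv ℝ u z - fderiv ℝ u x) z :=
    (hd z hzs).hasFDerivAt.sub (fderiv ℝ u x).hasFDerivAt
  exact sub_eq_zero.1 (hloc.hasFDerivAt_eq_zero h0)

end Convex

section Gradient

variable {d : ℕ}

lemma hasFDerivAt_gradient {Ω : Set (EuclideanSpace ℝ (Fin d))} (ho : IsOpen Ω)
    {u : EuclideanSpace ℝ (Fin d) → ℝ} (hu : ContDiffOn ℝ 2 u Ω)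
    {x : EuclideanSpace ℝ (Fin d)} (hx : x ∈ Ω) :
    HasFDerivAt (gradient u) (fderiv ℝ (gradient u) x) x := by
  have h1 : DifferentiableAt ℝ (fderiv ℝ u) x :=
    ((hu.fderiv_of_isOpen ho (m := 1) (by norm_num)).differentiableOn one_ne_zero).differentiableAt
      (ho.mem_nhds hx)
  exact ((InnerProductSpace.toDual ℝ
    (EuclideanSpace ℝ (Fin d))).symm.toContinuousLinearEquiv.differentiableAt.comp x
    h1).hasFDerivAt

lemma pd_eq_gradient (u : EuclideanSpace ℝ (Fin d) → ℝ) (j : Fin d) :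
    pd j u = fun y => gradient u y j := by
  funext y
  have h : fderiv ℝ u y = InnerProductSpace.toDual ℝ (EuclideanSpace ℝ (Fin d)) (gradient u y) := by
    simp [gradient]
  rw [pd, h, InnerProductSpace.toDual_apply_apply, EuclideanSpace.inner_single_right]
  simp

/-- The Jacobian determinant of `∇u` is the determinant of the Hessian; the Jacobian matrix itself
is the transpose of `Hess u x`, so no symmetry of second derivatives is needed. -/
lemma det_fderiv_gradient {Ω : Set (EuclideanSpace ℝ (Fin d))} (ho : IsOpen Ω)
    {u : EuclideanSpace ℝ (Fin d) → ℝ} (hu : ContDiffOn ℝ 2 u Ω)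
    {x : EuclideanSpace ℝ (Fin d)} (hx : x ∈ Ω) : (fderiv ℝ (gradient u) x).det = (Hess u x).det := by
  have hg := hasFDerivAt_gradient ho hu hx
  rw [ContinuousLinearMap.det,
    ← LinearMap.det_toMatrix (EuclideanSpace.basisFun (Fin d) ℝ).toBasis, ← Matrix.det_transpose]
  congr 1
  ext i j
  have h : HasFDerivAt (fun y => gradient u y j)
      ((EuclideanSpace.proj j : EuclideanSpace ℝ (Fin d) →L[ℝ] ℝ) ∘L fderiv ℝ (gradient u) x) x :=
    (EuclideanSpace.proj j : EuclideanSpace ℝ (Fin d) →L[ℝ] ℝ).hasFDerivAt.comp x hg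
  simp [Hess, LinearMap.toMatrix_apply, pd_eq_gradient u j, pd, h.fderiv]

/-- The gradient of a convex `C²` function is injective on the set where the Hessian is
nondegenerate. -/
lemma injOn_gradient {Ω : Set (EuclideanSpace ℝ (Fin d))} (ho : IsOpen Ω)
    {u : EuclideanSpace ℝ (Fin d) → ℝ} (hu : ContDiffOn ℝ 2 u Ω)
    (hconv : ConvexOn ℝ Ω u) : Set.InjOn (gradient u) {x ∈ Ω | (Hess u x).det ≠ 0} := by
  rintro x ⟨hx, hdet⟩ y ⟨hy, -⟩ hxy
  by_contra hne
  have hd : ∀ z ∈ Ω, DifferentiableAt ℝ u z := fun z hz =>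
    (hu.differentiableOn two_ne_zero).differentiableAt (ho.mem_nhds hz)
  have hseg : ∀ t ∈ Set.Icc (0 : ℝ) 1, gradient u (AffineMap.lineMap x y t) = gradient u x := by
    intro t ht
    refine congrArg (InnerProductSpace.toDual ℝ (EuclideanSpace ℝ (Fin d))).symm ?_
    refine fderiv_eq_on_segment_s3 ho hconv hd hx hy
      ((InnerProductSpace.toDual ℝ (EuclideanSpace ℝ (Fin d))).symm.injective hxy) ?_
    rw [segment_eq_image_lineMap]
    exact Set.mem_image_of_mem _ ht
  have h1 : HasDerivAt (gradient u ∘ (AffineMap.lineMap x y : ℝ →ᵃ[ℝ] (EuclideanSpace ℝ (Fin d))))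
      (fderiv ℝ (gradient u) x (y - x)) 0 := by
    refine HasFDerivAt.comp_hasDerivAt (0 : ℝ) ?_ AffineMap.hasDerivAt_lineMap
    simpa using hasFDerivAt_gradient ho hu hx
  -- The gradient is constant along the segment, so its one-sided derivative at `x` vanishes.
  have h2 : HasDerivWithinAt
      (gradient u ∘ (AffineMap.lineMap x y : ℝ →ᵃ[ℝ] (EuclideanSpace ℝ (Fin d)))) 0
      (Set.Icc 0 1) 0 :=
    (hasDerivWithinAt_const (0 : ℝ) (Set.Icc (0 : ℝ) 1) (gradient u x)).congr hseg
      (hseg 0 (by simp))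
  have h3 : fderiv ℝ (gradient u) x (y - x) = 0 :=
    (uniqueDiffOn_Icc (zero_lt_one' ℝ) 0 (by simp)).eq_deriv _ h1.hasDerivWithinAt h2
  rw [← det_fderiv_gradient ho hu hx, ContinuousLinearMap.det] at hdet
  have : y - x = 0 := (LinearEquiv.map_eq_zero_iff (LinearMap.equivOfDetNeZero _ hdet)).1 h3
  exact hne (sub_eq_zero.1 this).symm

end Gradient

/-- If moreover `u` is Lipschitz on `Ω` with constant `M`, then
`∫_Ω K ≤ ∫_{|p|<M} (1+|p|²)^{-(d+2)/2} dp < ω_d`; in particular the strict inequality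
`∫_Ω K < ω_d` (condition (2.3) of Trudinger–Urbas) is necessary for solvability. -/
theorem integral_curvature_lt_omega_d_of_lipschitz (d : ℕ) (hd : 1 ≤ d)
    (Ω : Set (EuclideanSpace ℝ (Fin d))) (hne : Ω.Nonempty) (ho : IsOpen Ω)
    (hb : Bornology.IsBounded Ω) (hc : Convex ℝ Ω)
    (K : EuclideanSpace ℝ (Fin d) → ℝ) (hKc : ContinuousOn K Ω) (hK0 : ∀ x ∈ Ω, 0 ≤ K x)
    (u : EuclideanSpace ℝ (Fin d) → ℝ) (hu : ContDiffOn ℝ 2 u Ω)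
    (hconv : ConvexOn ℝ Ω u)
    (M : ℝ) (hM : 0 ≤ M) (hLip : LipschitzOnWith M.toNNReal u Ω)
    (heq : ∀ x ∈ Ω, (Hess u x).det =
      K x * (1 + ‖gradient u x‖ ^ 2) ^ (((d : ℝ) + 2) / 2)) :
    (∫ x in Ω, K x) ≤
        (∫ p in Metric.ball (0 : EuclideanSpace ℝ (Fin d)) M,
          (1 + ‖p‖ ^ 2) ^ (-((d : ℝ) + 2) / 2)) ∧
      (∫ p in Metric.ball (0 : EuclideanSpace ℝ (Fin d)) M,
          (1 + ‖p‖ ^ 2) ^ (-((d : ℝ) + 2) / 2)) <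
        ∫ p : EuclideanSpace ℝ (Fin d), (1 + ‖p‖ ^ 2) ^ (-((d : ℝ) + 2) / 2) := by
  have : Nonempty (Fin d) := ⟨⟨0, hd⟩⟩
  set φ : EuclideanSpace ℝ (Fin d) → ℝ := fun p => (1 + ‖p‖ ^ 2) ^ (-((d : ℝ) + 2) / 2) with hφ
  have hφpos : ∀ p, 0 < φ p := fun p => by positivity
  have hφint : Integrable φ := integrable_rpow_neg_one_add_norm_sq (by simp)
  refine ⟨?_, ?_⟩
  · set S : Set (EuclideanSpace ℝ (Fin d)) := Ω ∩ K ⁻¹' Set.Ioi 0 with hS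
    have hSm : MeasurableSet S := (hKc.isOpen_inter_preimage ho isOpen_Ioi).measurableSet
    have hrestrict : ∫ x in Ω, K x = ∫ x in S, K x := by
      refine setIntegral_eq_of_subset_of_forall_sdiff_eq_zero ho.measurableSet
        Set.inter_subset_left fun x hx => le_antisymm ?_ (hK0 x hx.1)
      exact not_lt.1 fun h => hx.2 ⟨hx.1, h⟩
    have hdetpos : ∀ x ∈ S, 0 < (Hess u x).det := by
      intro x hx
      rw [heq x hx.1]
      have : 0 < K x := hx.2
      positivity
    have hinj : Set.InjOn (gradient u) S :=
      by
      refine (injOn_gradient ho hu hconv).mono fun x hx => ?_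
      exact ⟨hx.1, (hdetpos x hx).ne'⟩
    have hcov : ∫ p in gradient u '' S, φ p = ∫ x in S, K x := by
      rw [integral_image_eq_integral_abs_det_fderiv_smul volume hSm
        (fun x hx => (hasFDerivAt_gradient ho hu hx.1).hasFDerivWithinAt) hinj]
      refine setIntegral_congr_fun hSm fun x hx => ?_
      have hpos : 0 < 1 + ‖gradient u x‖ ^ 2 := by positivity
      simp only [det_fderiv_gradient ho hu hx.1, abs_of_pos (hdetpos x hx), smul_eq_mul, hφ]
      rw [heq x hx.1, mul_assoc, ← Real.rpow_add hpos]
      ring_nf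
      simp
    have himg : gradient u '' S ⊆ Metric.closedBall 0 M := by
      rintro _ ⟨x, hx, rfl⟩
      have h := norm_fderiv_le_of_lipschitzOn ℝ (ho.mem_nhds hx.1) hLip
      rw [Real.coe_toNNReal M hM] at h
      simpa [gradient] using h
    have hball : Metric.closedBall (0 : EuclideanSpace ℝ (Fin d)) M =ᵐ[volume]
        Metric.ball 0 M := by
      rw [← Metric.ball_union_sphere]
      exact union_ae_eq_left_of_ae_eq_empty
        (ae_eq_empty.2 (Measure.addHaar_sphere volume 0 M))
    rw [hrestrict, ← hcov, ← setIntegral_congr_set hball]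
    exact setIntegral_mono_set hφint.integrableOn
      (Filter.Eventually.of_forall fun p => (hφpos p).le) himg.eventuallyLE
  · rw [← integral_add_compl (Metric.isOpen_ball (x := (0 : EuclideanSpace ℝ (Fin d)))
      (ε := M)).measurableSet hφint]
    have hmeas : 0 < volume (Metric.ball (0 : EuclideanSpace ℝ (Fin d)) M)ᶜ := by
      refine pos_iff_ne_zero.2 fun h0 => ?_
      have htop : volume (Set.univ : Set (EuclideanSpace ℝ (Fin d))) < ⊤ := by
        rw [← Set.union_compl_self (Metric.ball (0 : EuclideanSpace ℝ (Fin d)) M)]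
        exact (measure_union_le _ _).trans_lt (by rw [h0]; simpa using measure_ball_lt_top)
      simp [measure_univ_of_isAddLeftInvariant] at htop
    have hsupp : Function.support φ = Set.univ := by
      ext p
      simpa using (hφpos p).ne'
    have : 0 < ∫ p in (Metric.ball (0 : EuclideanSpace ℝ (Fin d)) M)ᶜ, φ p := by
      rw [setIntegral_pos_iff_support_of_nonneg_ae
        (Filter.Eventually.of_forall fun p => (hφpos p).le) hφint.integrableOn, hsupp]
      simpa using hmeas
    linarith
end
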